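/- arXiv:1606.04660 — 9 statements merged into one kernel-verified Lean document; each statement's English description precedes it below -/
import Mathlib

section
/- In the abstract VMS setup, the map v ↦ v − C v restricted to V_H is an injective linear map whose range is exactly the multiscale test space W_H; moreover I_H(v − C v) = v for every v ∈ V_H. In particular W_H and V_H have the same (finite) dimension. -/
/-- The multiscale test space `W_H := {w ∈ V_h : a v w = 0 for all v ∈ R}`. -/
def testSpace {V : Type*} [NormedAddCommGroup V] [InnerProductSpace ℝ V]
    (a : V →ₗ[ℝ] V →ₗ[ℝ] ℝ) (R : Submodule ℝ V) : Submodule ℝ V where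
  carrier := {w | ∀ v ∈ R, a v w = 0}
  add_mem' := by
    intro x y hx hy v hv
    simp [map_add, hx v hv, hy v hv]
  zero_mem' := by
    intro v hv
    simp
  smul_mem' := by
    intro c x hx v hv
    simp [hx v hv]

/-- **The ideal test space via the corrector.**
In the abstract VMS setup (`V_h` a finite-dimensional real inner product space, `a` a
coercive bilinear form, `I_H` a linear projection with range `V_H` and kernel `R_H`, and
`C` the corrector assigning to `v` the unique `C v ∈ R_H` with `a w (C v) = a w v` for all
`w ∈ R_H`), the map `v ↦ v − C v` restricted to `V_H` is an injective linear map with range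
exactly `W_H`; moreover `I_H (v − C v) = v` for every `v ∈ V_H`. In particular `W_H` and
`V_H` have the same finite dimension. -/
theorem idealTestSpace_properties
    {V_h : Type*} [NormedAddCommGroup V_h] [InnerProductSpace ℝ V_h]
    [FiniteDimensional ℝ V_h]
    (a : V_h →ₗ[ℝ] V_h →ₗ[ℝ] ℝ)
    (ε : ℝ) (hε : 0 < ε) (hcoer : ∀ v : V_h, ε * ‖v‖ ^ 2 ≤ a v v)
    (I_H : V_h →ₗ[ℝ] V_h) (hproj : I_H ∘ₗ I_H = I_H)
    (C : V_h → V_h)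
    (hC_mem : ∀ v : V_h, C v ∈ LinearMap.ker I_H)
    (hC : ∀ v : V_h, ∀ w ∈ LinearMap.ker I_H, a w (C v) = a w v) :
    -- injectivity of `v ↦ v − C v` on `V_H`
    (∀ v₁ ∈ LinearMap.range I_H, ∀ v₂ ∈ LinearMap.range I_H,
        v₁ - C v₁ = v₂ - C v₂ → v₁ = v₂) ∧
    -- additivity of `v ↦ v − C v` on `V_H`
    (∀ v₁ ∈ LinearMap.range I_H, ∀ v₂ ∈ LinearMap.range I_H,
        (v₁ + v₂) - C (v₁ + v₂) = (v₁ - C v₁) + (v₂ - C v₂)) ∧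
    -- homogeneity of `v ↦ v − C v` on `V_H`
    (∀ (c : ℝ), ∀ v ∈ LinearMap.range I_H,
        (c • v) - C (c • v) = c • (v - C v)) ∧
    -- the range of `v ↦ v − C v` on `V_H` is exactly `W_H`
    ({x : V_h | ∃ v ∈ LinearMap.range I_H, v - C v = x}
        = (testSpace a (LinearMap.ker I_H) : Set V_h)) ∧
    -- `I_H (v − C v) = v` for every `v ∈ V_H`
    (∀ v ∈ LinearMap.range I_H, I_H (v - C v) = v) ∧
    -- `W_H` and `V_H` have the same (finite) dimension
    Module.finrank ℝ (testSpace a (LinearMap.ker I_H))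
      = Module.finrank ℝ (LinearMap.range I_H) := by
  have huniq : ∀ r ∈ LinearMap.ker I_H, (∀ w ∈ LinearMap.ker I_H, a w r = 0) → r = 0 := by
    intro r hr h
    have h1 := hcoer r
    rw [h r hr] at h1
    by_contra hne
    have h2 : 0 < ‖r‖ := norm_pos_iff.mpr hne
    have h3 : 0 < ε * ‖r‖ ^ 2 := by positivity
    linarith
  have hII : ∀ v ∈ LinearMap.range I_H, I_H v = v := by
    rintro v ⟨x, rfl⟩
    exact LinearMap.congr_fun hproj x
  have hIC : ∀ v, I_H (C v) = 0 := fun v => hC_mem v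
  have hI : ∀ v ∈ LinearMap.range I_H, I_H (v - C v) = v := by
    intro v hv
    rw [map_sub, hIC, hII v hv, sub_zero]
  have hadd : ∀ v₁ v₂, C (v₁ + v₂) = C v₁ + C v₂ := by
    intro v₁ v₂
    refine sub_eq_zero.mp (huniq _ ?_ ?_)
    · simp [LinearMap.mem_ker, hIC]
    · intro w hw
      simp [map_sub, map_add, hC _ w hw]
  have hsmul : ∀ (c : ℝ) v, C (c • v) = c • C v := by
    intro c v
    refine sub_eq_zero.mp (huniq _ ?_ ?_)
    · simp [LinearMap.mem_ker, hIC]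
    · intro w hw
      simp [map_sub, hC _ w hw]
  have hW : ∀ v, v - C v ∈ testSpace a (LinearMap.ker I_H) := by
    intro v w hw
    rw [map_sub, hC v w hw, sub_self]
  have hback : ∀ w ∈ testSpace a (LinearMap.ker I_H), I_H w - C (I_H w) = w := by
    intro w hw
    refine sub_eq_zero.mp (huniq _ ?_ ?_)
    · rw [LinearMap.mem_ker, map_sub, hI _ ⟨w, rfl⟩, sub_self]
    · exact (testSpace a (LinearMap.ker I_H)).sub_mem (hW _) hw
  refine ⟨?_, ?_, ?_, ?_, hI, ?_⟩
  · intro v₁ h₁ v₂ h₂ h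
    rw [← hI v₁ h₁, h, hI v₂ h₂]
  · intro v₁ _ v₂ _
    rw [hadd]
    abel
  · intro c v _
    rw [hsmul, smul_sub]
  · ext x
    constructor
    · rintro ⟨v, _, rfl⟩
      exact hW v
    · intro hx
      exact ⟨I_H x, ⟨x, rfl⟩, hback x hx⟩
  · refine (LinearEquiv.ofBijective
      (I_H.rangeRestrict ∘ₗ (testSpace a (LinearMap.ker I_H)).subtype) ⟨?_, ?_⟩).finrank_eq
    · intro x y h
      have h' : I_H x = I_H y := congrArg Subtype.val h
      apply Subtype.ext
      rw [← hback x x.2, h', hback y y.2]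
    · rintro ⟨v, hv⟩
      exact ⟨⟨v - C v, hW v⟩, Subtype.ext (hI v hv)⟩
end

section
/- In the abstract VMS setup, let F : V_h → ℝ be a linear functional and let u_h ∈ V_h be the unique solution of a(u_h, v) = F(v) for all v ∈ V_h. Then the ideal Petrov–Galerkin problem — find u_H ∈ V_H with a(u_H, w) = F(w) for all w ∈ W_H — has exactly one solution, and this solution is u_H = I_H u_h. -/
/-- **Unique solvability of the ideal Petrov–Galerkin method.**
In the abstract VMS setup, let `F` be a linear functional on `V_h` and let `u_h` be the
unique solution of `a u_h v = F v` for all `v ∈ V_h`. Then the ideal Petrov–Galerkin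
problem — find `u_H ∈ V_H` with `a u_H w = F w` for all `w ∈ W_H` — has exactly one
solution, namely `u_H = I_H u_h`. -/
theorem ideal_method_solution
    {V_h : Type*} [NormedAddCommGroup V_h] [InnerProductSpace ℝ V_h]
    [FiniteDimensional ℝ V_h]
    (a : V_h →ₗ[ℝ] V_h →ₗ[ℝ] ℝ)
    (ε : ℝ) (hε : 0 < ε) (hcoer : ∀ v : V_h, ε * ‖v‖ ^ 2 ≤ a v v)
    (I_H : V_h →ₗ[ℝ] V_h) (hproj : I_H ∘ₗ I_H = I_H)
    (C : V_h → V_h)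
    (hC_mem : ∀ v : V_h, C v ∈ LinearMap.ker I_H)
    (hC : ∀ v : V_h, ∀ w ∈ LinearMap.ker I_H, a w (C v) = a w v)
    (F : V_h →ₗ[ℝ] ℝ)
    (u_h : V_h) (hu_h : ∀ v : V_h, a u_h v = F v) :
    -- `I_H u_h` belongs to `V_H`, ...
    I_H u_h ∈ LinearMap.range I_H ∧
    -- ... solves the ideal Petrov–Galerkin problem, ...
    (∀ w ∈ testSpace a (LinearMap.ker I_H), a (I_H u_h) w = F w) ∧
    -- ... and is its only solution in `V_H`.
    (∀ u ∈ LinearMap.range I_H,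
      (∀ w ∈ testSpace a (LinearMap.ker I_H), a u w = F w) → u = I_H u_h) := by
  have hI : ∀ x, I_H (I_H x) = I_H x := fun x => LinearMap.congr_fun hproj x
  have hsol : ∀ w ∈ testSpace a (LinearMap.ker I_H), a (I_H u_h) w = F w := by
    intro w hw
    have h := hw (u_h - I_H u_h) (by simp [hI])
    rw [map_sub, LinearMap.sub_apply, hu_h] at h
    linarith
  refine ⟨⟨u_h, rfl⟩, hsol, ?_⟩
  rintro u ⟨x, rfl⟩ hu
  set e := I_H x - I_H u_h with he
  have hIe : I_H e = e := by simp [he, hI]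
  have hw : e - C e ∈ testSpace a (LinearMap.ker I_H) := by
    intro v hv
    rw [map_sub, hC e v hv, sub_self]
  have h1 : a e (e - C e) = 0 := by
    have h2 := hu _ hw
    have h3 := hsol _ hw
    have h4 : a e (e - C e) = a (I_H x) (e - C e) - a (I_H u_h) (e - C e) := by
      rw [← LinearMap.sub_apply, ← map_sub a]
    rw [h4, h2, h3, sub_self]
  have h5 : a (e - C e) (e - C e) = 0 := by
    have h6 : a (C e) (e - C e) = 0 := hw _ (hC_mem e)
    have h7 : a (e - C e) (e - C e) = a e (e - C e) - a (C e) (e - C e) := by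
      rw [map_sub a, LinearMap.sub_apply]
    rw [h7, h1, h6, sub_self]
  have h8 := hcoer (e - C e)
  rw [h5] at h8
  have h9 : ‖e - C e‖ ^ 2 = 0 :=
    le_antisymm (by by_contra hlt; push Not at hlt; nlinarith [mul_pos hε hlt]) (sq_nonneg _)
  have h10 : e = C e := sub_eq_zero.mp (norm_eq_zero.mp (pow_eq_zero_iff two_ne_zero |>.mp h9))
  have h11 : I_H (C e) = 0 := hC_mem e
  rw [← h10, hIe] at h11
  exact sub_eq_zero.mp h11
end

section
/- In the abstract VMS setup, assume additionally that C_I > 0 satisfies ‖I_H v‖ ≤ C_I ‖v‖ for all v ∈ V_h. Let F : V_h → ℝ be a linear functional, let u_h ∈ V_h be the unique solution of a(u_h, v) = F(v) for all v ∈ V_h, and let u_H ∈ V_H be the unique solution of the ideal Petrov–Galerkin problem a(u_H, w) = F(w) for all w ∈ W_H. Then the method is stable in the sense that ‖u_H‖ ≤ C_I ‖u_h‖. -/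
/-- **Stability of the ideal Petrov–Galerkin method.**
In the abstract VMS setup, assume moreover that `‖I_H v‖ ≤ C_I ‖v‖` for all `v ∈ V_h`.
Let `u_h` solve `a u_h v = F v` for all `v ∈ V_h` and let `u_H ∈ V_H` solve the ideal
Petrov–Galerkin problem `a u_H w = F w` for all `w ∈ W_H`. Then `‖u_H‖ ≤ C_I ‖u_h‖`. -/
theorem ideal_method_stability
    {V_h : Type*} [NormedAddCommGroup V_h] [InnerProductSpace ℝ V_h]
    [FiniteDimensional ℝ V_h]
    (a : V_h →ₗ[ℝ] V_h →ₗ[ℝ] ℝ)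
    (ε : ℝ) (hε : 0 < ε) (hcoer : ∀ v : V_h, ε * ‖v‖ ^ 2 ≤ a v v)
    (I_H : V_h →ₗ[ℝ] V_h) (hproj : I_H ∘ₗ I_H = I_H)
    (C : V_h → V_h)
    (hC_mem : ∀ v : V_h, C v ∈ LinearMap.ker I_H)
    (hC : ∀ v : V_h, ∀ w ∈ LinearMap.ker I_H, a w (C v) = a w v)
    (C_I : ℝ) (hCI : 0 < C_I) (hI_bound : ∀ v : V_h, ‖I_H v‖ ≤ C_I * ‖v‖)
    (F : V_h →ₗ[ℝ] ℝ)
    (u_h : V_h) (hu_h : ∀ v : V_h, a u_h v = F v)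
    (u_H : V_h) (hu_H_mem : u_H ∈ LinearMap.range I_H)
    (hu_H : ∀ w ∈ testSpace a (LinearMap.ker I_H), a u_H w = F w) :
    ‖u_H‖ ≤ C_I * ‖u_h‖ := by
  obtain ⟨y, hy⟩ := hu_H_mem
  have hII : ∀ v, I_H (I_H v) = I_H v := fun v => LinearMap.congr_fun hproj v
  have hW : ∀ v, v - C v ∈ testSpace a (LinearMap.ker I_H) := by
    intro v w hw
    rw [map_sub, hC v w hw, sub_self]
  set e := u_H - I_H u_h with he
  have hIe : I_H e = e := by
    rw [he, ← hy, map_sub, hII, hII]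
  have h1 : a u_H (e - C e) = a u_h (e - C e) := by
    rw [hu_H _ (hW e), hu_h]
  have h2 : a (u_h - I_H u_h) (e - C e) = 0 := by
    refine hW e _ ?_
    rw [LinearMap.mem_ker, map_sub, hII, sub_self]
  have h3 : a (C e) (e - C e) = 0 := hW e _ (hC_mem e)
  have h4 : a e (e - C e) = 0 := by
    have h5 : e = u_H - u_h + (u_h - I_H u_h) := by rw [he]; abel
    calc a e (e - C e) = a (u_H - u_h + (u_h - I_H u_h)) (e - C e) := by rw [← h5]
      _ = 0 := by
        rw [map_add, LinearMap.add_apply, h2, map_sub a, LinearMap.sub_apply, h1]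
        simp
  have h6 : a (e - C e) (e - C e) = 0 := by
    rw [map_sub a, LinearMap.sub_apply, h3, h4, sub_zero]
  have h7 : ‖e - C e‖ ^ 2 = 0 := by
    have h8 := hcoer (e - C e)
    rw [h6] at h8
    nlinarith [sq_nonneg ‖e - C e‖]
  have h9 : e = C e := by
    rw [sq_eq_zero_iff, norm_eq_zero] at h7
    exact sub_eq_zero.mp h7
  have h10 : e = 0 := by
    have h11 : I_H (C e) = 0 := LinearMap.mem_ker.mp (hC_mem e)
    rw [← h9, hIe] at h11
    exact h11
  have h12 : u_H = I_H u_h := sub_eq_zero.mp h10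
  rw [h12]
  exact hI_bound u_h
end

section
/- In the abstract VMS setup, assume additionally that C_I > 0 satisfies ‖I_H v‖ ≤ C_I ‖v‖ for all v ∈ V_h. Let F : V_h → ℝ be a linear functional, let u_h ∈ V_h be the unique solution of a(u_h, v) = F(v) for all v ∈ V_h, and let u_H ∈ V_H be the unique solution of the ideal Petrov–Galerkin problem a(u_H, w) = F(w) for all w ∈ W_H. Then the quasi-optimality estimate ‖u_h − u_H‖ ≤ (1 + C_I) ‖u_h − v_H‖ holds for every v_H ∈ V_H. -/
/-- **Quasi-optimality of the ideal Petrov–Galerkin method.**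
In the abstract VMS setup, assume moreover that `‖I_H v‖ ≤ C_I ‖v‖` for all `v ∈ V_h`.
Let `u_h` solve `a u_h v = F v` for all `v ∈ V_h` and let `u_H ∈ V_H` solve the ideal
Petrov–Galerkin problem `a u_H w = F w` for all `w ∈ W_H`. Then
`‖u_h − u_H‖ ≤ (1 + C_I) ‖u_h − v_H‖` for every `v_H ∈ V_H`. -/
theorem ideal_method_quasiOptimality
    {V_h : Type*} [NormedAddCommGroup V_h] [InnerProductSpace ℝ V_h]
    [FiniteDimensional ℝ V_h]
    (a : V_h →ₗ[ℝ] V_h →ₗ[ℝ] ℝ)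
    (ε : ℝ) (hε : 0 < ε) (hcoer : ∀ v : V_h, ε * ‖v‖ ^ 2 ≤ a v v)
    (I_H : V_h →ₗ[ℝ] V_h) (hproj : I_H ∘ₗ I_H = I_H)
    (C : V_h → V_h)
    (hC_mem : ∀ v : V_h, C v ∈ LinearMap.ker I_H)
    (hC : ∀ v : V_h, ∀ w ∈ LinearMap.ker I_H, a w (C v) = a w v)
    (C_I : ℝ) (hCI : 0 < C_I) (hI_bound : ∀ v : V_h, ‖I_H v‖ ≤ C_I * ‖v‖)
    (F : V_h →ₗ[ℝ] ℝ)
    (u_h : V_h) (hu_h : ∀ v : V_h, a u_h v = F v)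
    (u_H : V_h) (hu_H_mem : u_H ∈ LinearMap.range I_H)
    (hu_H : ∀ w ∈ testSpace a (LinearMap.ker I_H), a u_H w = F w) :
    ∀ v_H ∈ LinearMap.range I_H, ‖u_h - u_H‖ ≤ (1 + C_I) * ‖u_h - v_H‖ := by
  rintro v_H ⟨y, rfl⟩
  obtain ⟨x, rfl⟩ := hu_H_mem
  have hII : ∀ z, I_H (I_H z) = I_H z := fun z => LinearMap.congr_fun hproj z
  -- `w = d - C d` with `d = u_h - u_H` lies in the test space
  have hw : ∀ v ∈ LinearMap.ker I_H,
      a v ((u_h - I_H x) - C (u_h - I_H x)) = 0 := by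
    intro v hv
    rw [map_sub, hC _ v hv, sub_self]
  have h1 := hu_H _ (show _ ∈ testSpace a (LinearMap.ker I_H) from hw)
  have h2 := hu_h ((u_h - I_H x) - C (u_h - I_H x))
  have h3 := hw _ (hC_mem (u_h - I_H x))
  have h4 := hcoer ((u_h - I_H x) - C (u_h - I_H x))
  have h5 : a ((u_h - I_H x) - C (u_h - I_H x)) ((u_h - I_H x) - C (u_h - I_H x)) = 0 := by
    rw [map_sub a (u_h - I_H x) (C (u_h - I_H x)), LinearMap.sub_apply, h3,
      map_sub a u_h (I_H x), LinearMap.sub_apply, h1, h2]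
    simp
  rw [h5] at h4
  have h6 : ‖(u_h - I_H x) - C (u_h - I_H x)‖ = 0 := by
    have h7 : ‖(u_h - I_H x) - C (u_h - I_H x)‖ ^ 2 ≤ 0 := by
      by_contra hcon
      push Not at hcon
      have := mul_pos hε hcon
      linarith
    exact pow_eq_zero_iff (two_ne_zero) |>.mp (le_antisymm h7 (sq_nonneg _))
  have h8 : u_h - I_H x = C (u_h - I_H x) := sub_eq_zero.mp (norm_eq_zero.mp h6)
  have h9 : I_H (u_h - I_H x) = 0 := by
    rw [h8]
    exact hC_mem _
  rw [map_sub, hII, sub_eq_zero] at h9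
  have h10 : u_h - I_H x = (u_h - I_H y) - I_H (u_h - I_H y) := by
    rw [map_sub, hII, h9]
    abel
  rw [h10]
  have h11 := norm_sub_le (u_h - I_H y) (I_H (u_h - I_H y))
  have h12 := hI_bound (u_h - I_H y)
  linarith
end

section
/- In the abstract VMS setup, assume additionally that C_I > 0 satisfies ‖I_H v‖ ≤ C_I ‖v‖ for all v ∈ V_h. Then the trial–test pairing (V_H, W_H) satisfies the inf-sup condition: for every w ∈ W_H with w ≠ 0 there exists u ∈ V_H with u ≠ 0 such that a(u, w) ≥ (ε / C_I) ‖u‖ ‖w‖. -/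
/-- **Inf-sup stability of the ideal trial–test pairing `(V_H, W_H)`.**
In the abstract VMS setup, assume moreover that `‖I_H v‖ ≤ C_I ‖v‖` for all `v ∈ V_h`.
Then for every `0 ≠ w ∈ W_H` there exists `0 ≠ u ∈ V_H` such that
`a u w ≥ (ε / C_I) ‖u‖ ‖w‖`. -/
theorem ideal_method_infSup
    {V_h : Type*} [NormedAddCommGroup V_h] [InnerProductSpace ℝ V_h]
    [FiniteDimensional ℝ V_h]
    (a : V_h →ₗ[ℝ] V_h →ₗ[ℝ] ℝ)
    (ε : ℝ) (hε : 0 < ε) (hcoer : ∀ v : V_h, ε * ‖v‖ ^ 2 ≤ a v v)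
    (I_H : V_h →ₗ[ℝ] V_h) (hproj : I_H ∘ₗ I_H = I_H)
    (C : V_h → V_h)
    (hC_mem : ∀ v : V_h, C v ∈ LinearMap.ker I_H)
    (hC : ∀ v : V_h, ∀ w ∈ LinearMap.ker I_H, a w (C v) = a w v)
    (C_I : ℝ) (hCI : 0 < C_I) (hI_bound : ∀ v : V_h, ‖I_H v‖ ≤ C_I * ‖v‖) :
    ∀ w ∈ testSpace a (LinearMap.ker I_H), w ≠ 0 →
      ∃ u ∈ LinearMap.range I_H, u ≠ 0 ∧ ε / C_I * ‖u‖ * ‖w‖ ≤ a u w := by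
  intro w hw hw0
  have hI : I_H (I_H w) = I_H w := LinearMap.congr_fun hproj w
  have hker : I_H w - w ∈ LinearMap.ker I_H := by
    rw [LinearMap.mem_ker, map_sub, hI, sub_self]
  have h0 : a (I_H w - w) w = 0 := hw _ hker
  have heq : a (I_H w) w = a w w := by
    rw [map_sub, LinearMap.sub_apply] at h0
    linarith
  have hpos : 0 < ‖w‖ := norm_pos_iff.mpr hw0
  have hc := hcoer w
  refine ⟨I_H w, LinearMap.mem_range_self I_H w, ?_, ?_⟩
  · intro hu
    rw [hu, map_zero, LinearMap.zero_apply] at heq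
    have : 0 < ε * ‖w‖ ^ 2 := by positivity
    linarith
  · rw [heq]
    calc ε / C_I * ‖I_H w‖ * ‖w‖ ≤ ε / C_I * (C_I * ‖w‖) * ‖w‖ := by
          gcongr
          exact hI_bound w
      _ = ε * ‖w‖ ^ 2 := by field_simp
      _ ≤ a w w := hc
end

section
/- Let b, t ∈ ℝ² be orthonormal vectors, m ∈ ℝ², H > 0, 0 < ε ≤ H, and ℓ ∈ ℕ with ℓ ≥ 1. For k ∈ ℕ let S_k ⊆ ℝ² denote the convex hull of the four points m + kH t + kH b, m − kH t + kH b, m + kH t − (kH²/ε) b, m − kH t − (kH²/ε) b. Then there exists a function η : ℝ² → ℝ such that: (i) 0 ≤ η(x) ≤ 1 for all x; (ii) η(x) = 0 for all x ∈ S_{ℓ−1}; (iii) η(x) = 1 for all x ∉ S_ℓ; (iv) η is Lipschitz continuous with Lipschitz constant 2/H; (v) for all x ∈ ℝ² and all s ≥ 0, η(x) − η(x + s b) ≤ s ε / H². -/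
open scoped RealInnerProductSpace

/-- Clamped maximum of three numbers. -/
noncomputable def clampMax (a c d : ℝ) : ℝ := max 0 (min 1 (max a (max c d)))

lemma clampMax_le {a c d a' c' d' e : ℝ} (he : 0 ≤ e) (h1 : a ≤ a' + e) (h2 : c ≤ c' + e)
    (h3 : d ≤ d' + e) : clampMax a c d ≤ clampMax a' c' d' + e := by
  unfold clampMax
  have hM : max a (max c d) ≤ max a' (max c' d') + e := by
    refine max_le ?_ (max_le ?_ ?_)
    · linarith [le_max_left a' (max c' d')]
    · linarith [le_max_right a' (max c' d'), le_max_left c' d']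
    · linarith [le_max_right a' (max c' d'), le_max_right c' d']
  generalize max a (max c d) = p at *
  generalize max a' (max c' d') = q at *
  grind

lemma onb_decomp (b t y : EuclideanSpace ℝ (Fin 2))
    (hb : ‖b‖ = 1) (ht : ‖t‖ = 1) (hbt : ⟪b, t⟫ = 0) :
    y = ⟪b, y⟫ • b + ⟪t, y⟫ • t := by
  have hb2 : ⟪b, b⟫ = 1 := by rw [real_inner_self_eq_norm_sq, hb]; norm_num
  have ht2 : ⟪t, t⟫ = 1 := by rw [real_inner_self_eq_norm_sq, ht]; norm_num
  simp only [PiLp.inner_apply, Fin.sum_univ_two, RCLike.inner_apply, conj_trivial] at *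
  generalize hb0 : b 0 = b0 at *
  generalize hb1 : b 1 = b1 at *
  generalize ht0 : t 0 = t0 at *
  generalize ht1 : t 1 = t1 at *
  have e1 : t0 = -b1 * (b0 * t1 - b1 * t0) := by linear_combination (-t0) * hb2 + b0 * hbt
  have e2 : t1 = b0 * (b0 * t1 - b1 * t0) := by linear_combination (-t1) * hb2 + b1 * hbt
  have e3 : (b0 * t1 - b1 * t0) ^ 2 = 1 := by
    linear_combination hb2 * (t0 ^ 2 + t1 ^ 2) + ht2 - hbt * (b0 * t0 + b1 * t1)
  generalize b0 * t1 - b1 * t0 = c at *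
  subst e1 e2
  ext i
  fin_cases i
  · simp [hb0, ht0]
    linear_combination (-(y 0)) * hb2 + (y 1 * b0 * b1 - y 0 * b1 ^ 2) * e3
  · simp [hb1, ht1]
    linear_combination (-(y 1)) * hb2 + (y 0 * b0 * b1 - y 1 * b0 ^ 2) * e3

lemma seg_mem {E : Type*} [AddCommGroup E] [Module ℝ E] {s : Set E} (hs : Convex ℝ s)
    (p d : E) {α β v : ℝ} (h1 : p + α • d ∈ s) (h2 : p + β • d ∈ s) (hαβ : α < β)
    (hv1 : α ≤ v) (hv2 : v ≤ β) : p + v • d ∈ s := by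
  have hpos : 0 < β - α := by linarith
  have h := hs h1 h2 (a := (β - v) / (β - α)) (b := (v - α) / (β - α))
    (div_nonneg (by linarith) hpos.le) (div_nonneg (by linarith) hpos.le)
    (by field_simp; ring)
  convert h using 1
  match_scalars
  · field_simp; ring
  · field_simp; ring

/-- **Existence of the anisotropic cut-off function `η`.**
Let `b, t ∈ ℝ²` be orthonormal, `m ∈ ℝ²`, `H > 0`, `0 < ε ≤ H`, `ℓ ≥ 1`, and for `k ∈ ℕ`
let `S k` be the convex hull of the four points
`m ± kH t + kH b` and `m ± kH t − (kH²/ε) b`. Then there is `η : ℝ² → ℝ` with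
`0 ≤ η ≤ 1`, `η = 0` on `S (ℓ−1)`, `η = 1` outside `S ℓ`, `η` Lipschitz with constant
`2/H`, and `η x − η (x + s b) ≤ s ε / H²` for all `x` and all `s ≥ 0`. -/
theorem cutoff_exists
    (b t : EuclideanSpace ℝ (Fin 2))
    (hb : ‖b‖ = 1) (ht : ‖t‖ = 1) (hbt : ⟪b, t⟫ = 0)
    (m : EuclideanSpace ℝ (Fin 2))
    (H ε : ℝ) (hH : 0 < H) (hε0 : 0 < ε) (hεH : ε ≤ H)
    (ℓ : ℕ) (hℓ : 1 ≤ ℓ)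
    (S : ℕ → Set (EuclideanSpace ℝ (Fin 2)))
    (hS : ∀ k : ℕ, S k = convexHull ℝ
      {m + ((k : ℝ) * H) • t + ((k : ℝ) * H) • b,
       m - ((k : ℝ) * H) • t + ((k : ℝ) * H) • b,
       m + ((k : ℝ) * H) • t - ((k : ℝ) * H ^ 2 / ε) • b,
       m - ((k : ℝ) * H) • t - ((k : ℝ) * H ^ 2 / ε) • b}) :
    ∃ η : EuclideanSpace ℝ (Fin 2) → ℝ,
      (∀ x, 0 ≤ η x ∧ η x ≤ 1) ∧
      (∀ x ∈ S (ℓ - 1), η x = 0) ∧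
      (∀ x ∉ S ℓ, η x = 1) ∧
      LipschitzWith (Real.toNNReal (2 / H)) η ∧
      (∀ x, ∀ s : ℝ, 0 ≤ s → η x - η (x + s • b) ≤ s * ε / H ^ 2) := by
  have hb2 : ⟪b, b⟫ = 1 := by rw [real_inner_self_eq_norm_sq, hb]; norm_num
  have ht2 : ⟪t, t⟫ = 1 := by rw [real_inner_self_eq_norm_sq, ht]; norm_num
  have htb : ⟪t, b⟫ = 0 := by rw [real_inner_comm]; exact hbt
  have hrH : ε / H ^ 2 ≤ 1 / H := by
    rw [div_le_div_iff₀ (by positivity) hH]; nlinarith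
  have hr0 : 0 < ε / H ^ 2 := by positivity
  have hcast : ((ℓ - 1 : ℕ) : ℝ) = (ℓ : ℝ) - 1 := by push_cast [hℓ]; ring
  have hℓr : (1 : ℝ) ≤ ℓ := by exact_mod_cast hℓ
  refine ⟨fun x => clampMax (⟪b, x - m⟫ / H - (ℓ - 1)) (-⟪b, x - m⟫ * (ε / H ^ 2) - (ℓ - 1))
    (|⟪t, x - m⟫| / H - (ℓ - 1)), ?_, ?_, ?_, ?_, ?_⟩
  · intro x
    unfold clampMax
    exact ⟨le_max_left _ _, max_le zero_le_one (min_le_left _ _)⟩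
  · intro x hx
    rw [hS, hcast] at hx
    have hk : (0 : ℝ) ≤ (ℓ : ℝ) - 1 := by linarith
    generalize (ℓ : ℝ) - 1 = k at *
    have hA : 0 ≤ k * H ^ 2 / ε := by positivity
    have hB : 0 ≤ k * H := by positivity
    have hconv : Convex ℝ {x : EuclideanSpace ℝ (Fin 2) |
        (⟪b, x⟫ ≤ ⟪b, m⟫ + k * H ∧ ⟪b, m⟫ - k * H ^ 2 / ε ≤ ⟪b, x⟫) ∧
        (⟪t, x⟫ ≤ ⟪t, m⟫ + k * H ∧ ⟪t, m⟫ - k * H ≤ ⟪t, x⟫)} := by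
      have L : ∀ w : EuclideanSpace ℝ (Fin 2), IsLinearMap ℝ (fun x => ⟪w, x⟫) := fun w =>
        ⟨fun x y => inner_add_right _ _ _, fun c x => by simp [inner_smul_right]⟩
      exact ((convex_halfSpace_le (L b) _).inter (convex_halfSpace_ge (L b) _)).inter
        ((convex_halfSpace_le (L t) _).inter (convex_halfSpace_ge (L t) _))
    have hx' := convexHull_min (t := _) (by
      rintro z (rfl | rfl | rfl | rfl) <;>
      · simp only [Set.mem_setOf_eq, inner_add_right, inner_sub_right, inner_smul_right,
          hb2, ht2, hbt, htb]
        refine ⟨⟨?_, ?_⟩, ?_, ?_⟩ <;> linarith) hconv hx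
    obtain ⟨⟨h1, h2⟩, h3, h4⟩ := hx'
    have g1 : ⟪b, x - m⟫ / H - k ≤ 0 := by
      rw [inner_sub_right, sub_nonpos, div_le_iff₀ hH]; linarith
    have g2 : -⟪b, x - m⟫ * (ε / H ^ 2) - k ≤ 0 := by
      have : -⟪b, x - m⟫ ≤ k * H ^ 2 / ε := by rw [inner_sub_right]; linarith
      have := mul_le_mul_of_nonneg_right this hr0.le
      have e : k * H ^ 2 / ε * (ε / H ^ 2) = k := by field_simp
      linarith
    have g3 : |⟪t, x - m⟫| / H - k ≤ 0 := by
      rw [sub_nonpos, div_le_iff₀ hH, inner_sub_right, abs_le]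
      constructor <;> linarith
    unfold clampMax
    exact max_eq_left ((min_le_right _ _).trans (max_le g1 (max_le g2 g3)))
  · intro x hx
    by_contra hne
    apply hx
    have hlt : max (⟪b, x - m⟫ / H - (ℓ - 1)) (max (-⟪b, x - m⟫ * (ε / H ^ 2) - (ℓ - 1))
        (|⟪t, x - m⟫| / H - (ℓ - 1))) < 1 := by
      by_contra hge
      apply hne
      simp only [clampMax]
      rw [min_eq_left (not_lt.mp hge)]
      exact max_eq_right zero_le_one
    obtain ⟨h1, h23⟩ := max_lt_iff.mp hlt
    obtain ⟨h2, h3⟩ := max_lt_iff.mp h23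
    have hdec : x = m + (⟪b, x - m⟫ • b + ⟪t, x - m⟫ • t) := by
      rw [← onb_decomp b t (x - m) hb ht hbt]; abel
    generalize ⟪b, x - m⟫ = u at *
    generalize ⟪t, x - m⟫ = v at *
    have g1 : u ≤ ℓ * H := by
      rw [← div_le_iff₀ hH]; linarith
    have g2 : -(ℓ * H ^ 2 / ε) ≤ u := by
      have e : (ℓ : ℝ) * H ^ 2 / ε * (ε / H ^ 2) = ℓ := by field_simp
      by_contra hc
      have := mul_lt_mul_of_pos_right (not_le.mp hc) hr0
      nlinarith
    have g3 : |v| ≤ ℓ * H := by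
      rw [← div_le_iff₀ hH]; linarith
    obtain ⟨g3, g4⟩ := abs_le.mp g3
    have hB : 0 < (ℓ : ℝ) * H := by positivity
    have hA : 0 < (ℓ : ℝ) * H ^ 2 / ε := by positivity
    rw [hS]
    have hsub := subset_convexHull ℝ
      {m + ((ℓ : ℝ) * H) • t + ((ℓ : ℝ) * H) • b,
       m - ((ℓ : ℝ) * H) • t + ((ℓ : ℝ) * H) • b,
       m + ((ℓ : ℝ) * H) • t - ((ℓ : ℝ) * H ^ 2 / ε) • b,
       m - ((ℓ : ℝ) * H) • t - ((ℓ : ℝ) * H ^ 2 / ε) • b}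
    have hcv := convex_convexHull ℝ
      {m + ((ℓ : ℝ) * H) • t + ((ℓ : ℝ) * H) • b,
       m - ((ℓ : ℝ) * H) • t + ((ℓ : ℝ) * H) • b,
       m + ((ℓ : ℝ) * H) • t - ((ℓ : ℝ) * H ^ 2 / ε) • b,
       m - ((ℓ : ℝ) * H) • t - ((ℓ : ℝ) * H ^ 2 / ε) • b}
    generalize (ℓ : ℝ) * H = B at *
    generalize (ℓ : ℝ) * H ^ 2 / ε = A at *
    have p1 := hsub (Set.mem_insert _ _)
    have p2 := hsub (Set.mem_insert_of_mem _ (Set.mem_insert _ _))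
    have p3 := hsub (Set.mem_insert_of_mem _ (Set.mem_insert_of_mem _ (Set.mem_insert _ _)))
    have p4 := hsub (Set.mem_insert_of_mem _ (Set.mem_insert_of_mem _
      (Set.mem_insert_of_mem _ (Set.mem_singleton _))))
    have q1 := seg_mem hcv (m + B • b) t (α := -B) (β := B) (v := v)
      (by convert p2 using 1; module) (by convert p1 using 1; module) (by linarith) g3 g4
    have q2 := seg_mem hcv (m - A • b) t (α := -B) (β := B) (v := v)
      (by convert p4 using 1; module) (by convert p3 using 1; module) (by linarith) g3 g4
    have q3 := seg_mem hcv (m + v • t) b (α := -A) (β := B) (v := u)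
      (by convert q2 using 1; module) (by convert q1 using 1; module) (by linarith) g2 g1
    rw [hdec]
    convert q3 using 1
    module
  · apply LipschitzWith.of_le_add_mul
    intro x y
    rw [Real.coe_toNNReal _ (by positivity)]
    have hd : 0 ≤ dist x y := dist_nonneg
    have key : ∀ w : EuclideanSpace ℝ (Fin 2), ‖w‖ = 1 →
        |⟪w, x - m⟫ - ⟪w, y - m⟫| ≤ dist x y := by
      intro w hw
      rw [← inner_sub_right, sub_sub_sub_cancel_right, dist_eq_norm]
      simpa [hw] using abs_real_inner_le_norm w (x - y)
    have kb := key b hb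
    have kt := key t ht
    have ktt := (abs_sub_abs_le_abs_sub _ _).trans kt
    obtain ⟨kb1, kb2⟩ := abs_le.mp kb
    have hH1 : 0 < 1 / H := by positivity
    have h2 : 2 / H * dist x y = 1 / H * dist x y + 1 / H * dist x y := by ring
    have h3 : 0 ≤ 1 / H * dist x y := by positivity
    apply clampMax_le (by positivity)
    · have := mul_le_mul_of_nonneg_left kb2 hH1.le
      rw [div_eq_mul_one_div, div_eq_mul_one_div ⟪b, y - m⟫]
      nlinarith
    · have h4 := mul_le_mul_of_nonneg_right hrH hd
      have := mul_le_mul_of_nonneg_left kb1 hr0.le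
      nlinarith
    · have := mul_le_mul_of_nonneg_left ktt hH1.le
      rw [div_eq_mul_one_div, div_eq_mul_one_div |⟪t, y - m⟫|]
      nlinarith
  · intro x s hs
    have e1 : ⟪b, x + s • b - m⟫ = ⟪b, x - m⟫ + s := by
      simp only [inner_sub_right, inner_add_right, inner_smul_right, hb2]; ring
    have e2 : ⟪t, x + s • b - m⟫ = ⟪t, x - m⟫ := by
      simp only [inner_sub_right, inner_add_right, inner_smul_right, htb]; ring
    have hse : 0 ≤ s * ε / H ^ 2 := by positivity
    simp only [e1, e2]
    rw [sub_le_iff_le_add']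
    apply clampMax_le hse
    · have : 0 ≤ s / H := by positivity
      rw [add_div]; linarith
    · apply le_of_eq; ring
    · linarith
end

section
/- Let V be a real inner product space and a : V × V → ℝ a bilinear form with |a(u,v)| ≤ M‖u‖‖v‖ for all u, v ∈ V, where M ≥ 0. Let V_H, W_H, W' be subspaces of V, let γ > 0 and 0 ≤ δ < 1, and let J : W' → W_H be a linear map with ‖J w − w‖ ≤ δ ‖w‖ for all w ∈ W'. Assume the inf-sup condition: for every w ∈ W_H with w ≠ 0 there exists u ∈ V_H with u ≠ 0 and a(u, w) ≥ γ ‖u‖ ‖w‖. Then for every w ∈ W' with w ≠ 0 there exists u ∈ V_H with u ≠ 0 such that a(u, w) ≥ (γ(1 − δ) − Mδ) ‖u‖ ‖w‖. -/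
/-- **Perturbation of the inf-sup condition.**
Let `V` be a real inner product space and `a` a bilinear form with `|a u v| ≤ M‖u‖‖v‖`.
Let `V_H, W_H, W'` be subspaces, `γ > 0`, `0 ≤ δ < 1`, and `J : W' → W_H` a linear map
with `‖J w − w‖ ≤ δ ‖w‖` for all `w ∈ W'`. If for every `0 ≠ w ∈ W_H` there exists
`0 ≠ u ∈ V_H` with `a u w ≥ γ‖u‖‖w‖`, then for every `0 ≠ w ∈ W'` there exists
`0 ≠ u ∈ V_H` with `a u w ≥ (γ(1 − δ) − Mδ)‖u‖‖w‖`. -/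
theorem infSup_perturbation
    {V : Type*} [NormedAddCommGroup V] [InnerProductSpace ℝ V]
    (a : V →ₗ[ℝ] V →ₗ[ℝ] ℝ)
    (M : ℝ) (hM : 0 ≤ M) (hbound : ∀ u v : V, |a u v| ≤ M * ‖u‖ * ‖v‖)
    (V_H W_H W' : Submodule ℝ V)
    (γ δ : ℝ) (hγ : 0 < γ) (hδ0 : 0 ≤ δ) (hδ1 : δ < 1)
    (J : W' →ₗ[ℝ] W_H)
    (hJ : ∀ w : W', ‖(J w : V) - (w : V)‖ ≤ δ * ‖(w : V)‖)
    (hinfsup : ∀ w ∈ W_H, w ≠ 0 →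
      ∃ u ∈ V_H, u ≠ 0 ∧ γ * ‖u‖ * ‖w‖ ≤ a u w) :
    ∀ w : W', (w : V) ≠ 0 →
      ∃ u ∈ V_H, u ≠ 0 ∧
        (γ * (1 - δ) - M * δ) * ‖u‖ * ‖(w : V)‖ ≤ a u (w : V) := by
  intro w hw
  have hwpos : 0 < ‖(w : V)‖ := norm_pos_iff.mpr hw
  have h1 := hJ w
  have h2 : (1 - δ) * ‖(w : V)‖ ≤ ‖(J w : V)‖ := by
    have h3 := norm_sub_norm_le (w : V) (J w : V)
    rw [norm_sub_rev] at h3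
    linarith
  have hJw : (J w : V) ≠ 0 := by
    rw [← norm_pos_iff]
    exact lt_of_lt_of_le (mul_pos (by linarith) hwpos) h2
  obtain ⟨u, hu, hu0, h⟩ := hinfsup (J w : V) (J w).2 hJw
  refine ⟨u, hu, hu0, ?_⟩
  have h4 := le_trans (le_abs_self _) (hbound u ((J w : V) - (w : V)))
  rw [map_sub] at h4
  have h5 := mul_le_mul_of_nonneg_left h1 (mul_nonneg hM (norm_nonneg u))
  have h6 := mul_le_mul_of_nonneg_left h2 (mul_nonneg hγ.le (norm_nonneg u))
  linarith
end

section
/- Let V be a finite-dimensional real inner product space, a : V × V → ℝ a bilinear form with |a(u,v)| ≤ M‖u‖‖v‖ for all u, v ∈ V (M ≥ 0), and F : V → ℝ a linear functional. Let V_H, W_H, W' be subspaces of V, let γ > 0 and δ ≥ 0, and let T : W' → W_H be a linear map with ‖w − T w‖ ≤ δ ‖w‖ for all w ∈ W'. Let u_h ∈ V satisfy a(u_h, v) = F(v) for all v ∈ V; let u_H ∈ V_H satisfy a(u_H, w) = F(w) for all w ∈ W_H; and let u' ∈ V_H satisfy a(u', w) = F(w) for all w ∈ W'. Assume the inf-sup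 condition: for every v ∈ V_H with v ≠ 0 there exists w ∈ W' with w ≠ 0 and a(v, w) ≥ γ ‖v‖ ‖w‖. Then ‖u_H − u'‖ ≤ (M δ / γ) ‖u_h − u_H‖. -/
/-- **Abstract localization-error lemma.**
Let `V` be a finite-dimensional real inner product space, `a` a bilinear form with
`|a u v| ≤ M‖u‖‖v‖`, and `F` a linear functional. Let `V_H, W_H, W'` be subspaces,
`γ > 0`, `δ ≥ 0`, and `T : W' → W_H` linear with `‖w − T w‖ ≤ δ‖w‖`. Let `u_h` solve
`a u_h v = F v` on `V`, `u_H ∈ V_H` solve against `W_H`, and `u' ∈ V_H` solve against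
`W'`. If for every `0 ≠ v ∈ V_H` there is `0 ≠ w ∈ W'` with `a v w ≥ γ‖v‖‖w‖`, then
`‖u_H − u'‖ ≤ (Mδ/γ) ‖u_h − u_H‖`. -/
theorem localization_error
    {V : Type*} [NormedAddCommGroup V] [InnerProductSpace ℝ V] [FiniteDimensional ℝ V]
    (a : V →ₗ[ℝ] V →ₗ[ℝ] ℝ)
    (M : ℝ) (hM : 0 ≤ M) (hbound : ∀ u v : V, |a u v| ≤ M * ‖u‖ * ‖v‖)
    (F : V →ₗ[ℝ] ℝ)
    (V_H W_H W' : Submodule ℝ V)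
    (γ δ : ℝ) (hγ : 0 < γ) (hδ : 0 ≤ δ)
    (T : W' →ₗ[ℝ] W_H)
    (hT : ∀ w : W', ‖(w : V) - (T w : V)‖ ≤ δ * ‖(w : V)‖)
    (u_h : V) (hu_h : ∀ v : V, a u_h v = F v)
    (u_H : V) (hu_H_mem : u_H ∈ V_H) (hu_H : ∀ w ∈ W_H, a u_H w = F w)
    (u' : V) (hu'_mem : u' ∈ V_H) (hu' : ∀ w ∈ W', a u' w = F w)
    (hinfsup : ∀ v ∈ V_H, v ≠ 0 →
      ∃ w : W', (w : V) ≠ 0 ∧ γ * ‖v‖ * ‖(w : V)‖ ≤ a v (w : V)) :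
    ‖u_H - u'‖ ≤ M * δ / γ * ‖u_h - u_H‖ := by
  by_cases h0 : u_H - u' = 0
  · rw [h0, norm_zero]
    positivity
  obtain ⟨w, hw0, hw⟩ := hinfsup _ (V_H.sub_mem hu_H_mem hu'_mem) h0
  have hwpos : 0 < ‖(w : V)‖ := norm_pos_iff.mpr hw0
  have key : a (u_H - u') (w : V) = a (u_H - u_h) ((w : V) - (T w : V)) := by
    simp only [map_sub, LinearMap.sub_apply, hu_h, hu' _ w.2, hu_H _ (T w).2]
    ring
  have h1 := (le_abs_self _).trans (hbound (u_H - u_h) ((w : V) - (T w : V)))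
  have h2 : M * ‖u_H - u_h‖ * ‖(w : V) - (T w : V)‖ ≤ M * ‖u_H - u_h‖ * (δ * ‖(w : V)‖) :=
    mul_le_mul_of_nonneg_left (hT w) (by positivity)
  have h3 : (γ * ‖u_H - u'‖) * ‖(w : V)‖ ≤ (M * δ * ‖u_H - u_h‖) * ‖(w : V)‖ := by
    rw [key] at hw
    linarith
  have h4 := le_of_mul_le_mul_right h3 hwpos
  rw [norm_sub_rev u_h u_H, div_mul_eq_mul_div, le_div_iff₀ hγ]
  linarith
end

section
/- In the abstract VMS setup, assume additionally: C_I > 0 satisfies ‖I_H v‖ ≤ C_I ‖v‖ for all v ∈ V_h; |a(u,v)| ≤ M‖u‖‖v‖ for all u, v ∈ V_h (M ≥ 0); W' is a subspace of V_h; γ > 0 and δ ≥ 0; T : W' → W_H is a linear map with ‖w − T w‖ ≤ δ ‖w‖ for all w ∈ W'; and for every v ∈ V_H with v ≠ 0 there exists w ∈ W' with w ≠ 0 and a(v, w) ≥ γ ‖v‖ ‖w‖. Let F : V_h → ℝ be a linear functional, let u_h ∈ V_h satisfy a(u_h, v) = F(v) for all v ∈ V_h, and let u' ∈ V_H satisfy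 a(u', w) = F(w) for all w ∈ W'. Then for every v_H ∈ V_H, ‖u_h − u'‖ ≤ (1 + M δ / γ)(1 + C_I) ‖u_h − v_H‖. -/
/-- **Global error estimate for the localized VMS method (abstract form).**
In the abstract VMS setup, assume in addition: `‖I_H v‖ ≤ C_I ‖v‖`; boundedness
`|a u v| ≤ M‖u‖‖v‖`; a subspace `W' ⊆ V_h`; constants `γ > 0`, `δ ≥ 0`; a linear
comparison map `T : W' → W_H` with defect `‖w − T w‖ ≤ δ‖w‖`; and the inf-sup condition
for the pairing `(V_H, W')`. Let `u_h` solve `a u_h v = F v` on `V_h` and let `u' ∈ V_H`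
solve the localized Petrov–Galerkin problem `a u' w = F w` for all `w ∈ W'`. Then for
every `v_H ∈ V_H`, `‖u_h − u'‖ ≤ (1 + Mδ/γ)(1 + C_I) ‖u_h − v_H‖`. -/
theorem localized_vms_global_error
    {V_h : Type*} [NormedAddCommGroup V_h] [InnerProductSpace ℝ V_h]
    [FiniteDimensional ℝ V_h]
    (a : V_h →ₗ[ℝ] V_h →ₗ[ℝ] ℝ)
    (ε : ℝ) (hε : 0 < ε) (hcoer : ∀ v : V_h, ε * ‖v‖ ^ 2 ≤ a v v)
    (I_H : V_h →ₗ[ℝ] V_h) (hproj : I_H ∘ₗ I_H = I_H)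
    (C : V_h → V_h)
    (hC_mem : ∀ v : V_h, C v ∈ LinearMap.ker I_H)
    (hC : ∀ v : V_h, ∀ w ∈ LinearMap.ker I_H, a w (C v) = a w v)
    (C_I : ℝ) (hCI : 0 < C_I) (hI_bound : ∀ v : V_h, ‖I_H v‖ ≤ C_I * ‖v‖)
    (M : ℝ) (hM : 0 ≤ M) (hbound : ∀ u v : V_h, |a u v| ≤ M * ‖u‖ * ‖v‖)
    (W' : Submodule ℝ V_h)
    (γ δ : ℝ) (hγ : 0 < γ) (hδ : 0 ≤ δ)
    (T : W' →ₗ[ℝ] V_h)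
    (hT_mem : ∀ w : W', T w ∈ testSpace a (LinearMap.ker I_H))
    (hT : ∀ w : W', ‖(w : V_h) - T w‖ ≤ δ * ‖(w : V_h)‖)
    (hinfsup : ∀ v ∈ LinearMap.range I_H, v ≠ 0 →
      ∃ w : W', (w : V_h) ≠ 0 ∧ γ * ‖v‖ * ‖(w : V_h)‖ ≤ a v (w : V_h))
    (F : V_h →ₗ[ℝ] ℝ)
    (u_h : V_h) (hu_h : ∀ v : V_h, a u_h v = F v)
    (u' : V_h) (hu'_mem : u' ∈ LinearMap.range I_H)
    (hu' : ∀ w : W', a u' (w : V_h) = F w) :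
    ∀ v_H ∈ LinearMap.range I_H,
      ‖u_h - u'‖ ≤ (1 + M * δ / γ) * (1 + C_I) * ‖u_h - v_H‖ := by
  rintro v_H ⟨z, rfl⟩
  have hp : ∀ x, I_H (I_H x) = I_H x := fun x => LinearMap.congr_fun hproj x
  have hek : u_h - I_H u_h ∈ LinearMap.ker I_H := by
    simp [LinearMap.mem_ker, map_sub, hp]
  have he : ‖u_h - I_H u_h‖ ≤ (1 + C_I) * ‖u_h - I_H z‖ := by
    have h1 : u_h - I_H u_h = (u_h - I_H z) - I_H (u_h - I_H z) := by
      rw [map_sub, hp]; abel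
    rw [h1]
    have h2 := norm_sub_le (u_h - I_H z) (I_H (u_h - I_H z))
    have h3 := hI_bound (u_h - I_H z)
    linarith
  have hv : ‖u' - I_H u_h‖ ≤ M * δ / γ * ‖u_h - I_H u_h‖ := by
    by_cases h0 : u' - I_H u_h = 0
    · rw [h0, norm_zero]; positivity
    · obtain ⟨w, hw0, hw⟩ := hinfsup (u' - I_H u_h)
        (Submodule.sub_mem _ hu'_mem ⟨u_h, rfl⟩) h0
      have hwp : 0 < ‖(w : V_h)‖ := norm_pos_iff.mpr hw0
      have hTe : a (u_h - I_H u_h) (T w) = 0 := hT_mem w _ hek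
      have h1 : a (u' - I_H u_h) (w : V_h) = a (u_h - I_H u_h) ((w : V_h) - T w) := by
        rw [map_sub (a (u_h - I_H u_h)), hTe, map_sub, map_sub, LinearMap.sub_apply,
          LinearMap.sub_apply, hu' w, hu_h]
        ring
      have h2 := (le_abs_self _).trans (hbound (u_h - I_H u_h) ((w : V_h) - T w))
      have h3 : M * ‖u_h - I_H u_h‖ * ‖(w : V_h) - T w‖
          ≤ M * ‖u_h - I_H u_h‖ * (δ * ‖(w : V_h)‖) :=
        mul_le_mul_of_nonneg_left (hT w) (by positivity)
      have h4 : (γ * ‖u' - I_H u_h‖) * ‖(w : V_h)‖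
          ≤ (M * δ * ‖u_h - I_H u_h‖) * ‖(w : V_h)‖ := by
        rw [h1] at hw
        linarith
      have h5 := le_of_mul_le_mul_right h4 hwp
      rw [div_mul_eq_mul_div, le_div_iff₀ hγ]
      linarith
  have ht : ‖u_h - u'‖ ≤ ‖u_h - I_H u_h‖ + ‖u' - I_H u_h‖ := by
    have h1 : u_h - u' = (u_h - I_H u_h) - (u' - I_H u_h) := by abel
    rw [h1]
    exact norm_sub_le _ _
  have hk : 0 ≤ 1 + M * δ / γ := by positivity
  have hf := mul_le_mul_of_nonneg_left he hk
  linarith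
end
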